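/- Let G be a graph. If the constant distance closure CDC(G) of G is a complete graph, then G is not movable. -/

import Mathlib

/-!
Identify the plane with `ℂ`. Along a flex, the difference of the ends of an edge is a function of
time with values in `ℂ`, and its product with its complex conjugate is a nonzero constant. If the
ratio of two edges is not constant, its range is infinite by connectedness of `[0, 1]`, so in a
suitable ultrapower of `ℂ` it is transcendental over `ℂ`, and some valuation trivial on the
constants takes a value greater than `1` on it. Coloring an edge according to whether its valuation
lies below a threshold `γ` is a NAC-coloring: in a cycle the edges sum to zero, so exactly one edge
of valuation at least `γ` is impossible, and exactly one edge of valuation below `γ` becomes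
impossible after conjugation, which inverts the valuations of edges. This coloring separates the
two edges. Hence along a walk that is monochromatic in all NAC-colorings the ratios of edges are
constant, and so is the distance between its ends: a flex of a graph stays a flex when the pairs of
`UPairs` are added as edges, as long as some placement along it is injective. Once all edges are
present, all distances are constant.
-/

open SimpleGraph Real

/-- The Euclidean plane. -/
abbrev Plane : Type := EuclideanSpace ℝ (Fin 2)

variable {V : Type*}

/-- A placement of a graph in the plane: endpoints of edges do not coincide. -/
def IsPlacement (G : SimpleGraph V) (p : V → Plane) : Prop :=
  ∀ ⦃u v : V⦄, G.Adj u v → p u ≠ p v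

/-- Two placements are equivalent as frameworks on `G` if corresponding
edge lengths agree. -/
def FrameworkEquiv (G : SimpleGraph V) (p q : V → Plane) : Prop :=
  ∀ ⦃u v : V⦄, G.Adj u v → dist (p u) (p v) = dist (q u) (q v)

/-- Two placements are congruent if all pairwise distances agree. -/
def PCongruent (p q : V → Plane) : Prop :=
  ∀ u v : V, dist (p u) (p v) = dist (q u) (q v)

/-- A flex of the framework `(G, p)`: a continuous path of placements on `[0,1]`
starting at `p`, each equivalent to `(G, p)`. -/
def IsFlex (G : SimpleGraph V) (p : V → Plane) (f : ℝ → V → Plane) : Prop :=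
  ContinuousOn f (Set.Icc 0 1) ∧ f 0 = p ∧
    ∀ t ∈ Set.Icc (0 : ℝ) 1, IsPlacement G (f t) ∧ FrameworkEquiv G p (f t)

/-- A flex is trivial if every placement along it is congruent to the initial one. -/
def IsTrivialFlex (p : V → Plane) (f : ℝ → V → Plane) : Prop :=
  ∀ t ∈ Set.Icc (0 : ℝ) 1, PCongruent (f t) p

/-- The placement `p` induces the labeling `lam`. -/
def Induces (G : SimpleGraph V) (p : V → Plane) (lam : Sym2 V → ℝ) : Prop :=
  ∀ ⦃u v : V⦄, G.Adj u v → dist (p u) (p v) = lam s(u, v)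

/-- A labeling (positive on the edges) is flexible if some framework inducing it
has a non-trivial flex. -/
def IsFlexibleLabeling (G : SimpleGraph V) (lam : Sym2 V → ℝ) : Prop :=
  (∀ e ∈ G.edgeSet, 0 < lam e) ∧
    ∃ p : V → Plane, Induces G p lam ∧ ∃ f, IsFlex G p f ∧ ¬ IsTrivialFlex p f

/-- A labeling is a proper flexible labeling if some framework inducing it has a
non-trivial flex in which all but finitely many placements are injective. -/
def IsProperFlexibleLabeling (G : SimpleGraph V) (lam : Sym2 V → ℝ) : Prop :=
  (∀ e ∈ G.edgeSet, 0 < lam e) ∧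
    ∃ p : V → Plane, Induces G p lam ∧ ∃ f, IsFlex G p f ∧ ¬ IsTrivialFlex p f ∧
      {t ∈ Set.Icc (0 : ℝ) 1 | ¬ Function.Injective (f t)}.Finite

/-- A graph is movable if it has a proper flexible labeling. -/
def Movable (G : SimpleGraph V) : Prop :=
  ∃ lam : Sym2 V → ℝ, IsProperFlexibleLabeling G lam

/-- A NAC-coloring: a surjective 2-coloring (`true` = red, `false` = blue) of the
edges such that every cycle is either monochromatic or contains at least two
edges of each color. -/
def IsNACColoring (G : SimpleGraph V) (δ : Sym2 V → Bool) : Prop :=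
  (∃ e ∈ G.edgeSet, δ e = true) ∧ (∃ e ∈ G.edgeSet, δ e = false) ∧
    ∀ ⦃v : V⦄ (c : G.Walk v v), c.IsCycle →
      (∀ e ∈ c.edges, δ e = true) ∨ (∀ e ∈ c.edges, δ e = false) ∨
        (2 ≤ (c.edges.filter (fun e => δ e)).length ∧
          2 ≤ (c.edges.filter (fun e => !(δ e))).length)

/-- The pairs `{u, v}` of non-adjacent vertices joined by a path that is
monochromatic for every NAC-coloring of `G`. -/
def UPairs (G : SimpleGraph V) : Set (Sym2 V) :=
  {p | ∃ u v : V, p = s(u, v) ∧ u ≠ v ∧ ¬ G.Adj u v ∧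
    ∃ w : G.Walk u v, w.IsPath ∧
      ∀ δ : Sym2 V → Bool, IsNACColoring G δ →
        (∀ e ∈ w.edges, δ e = true) ∨ (∀ e ∈ w.edges, δ e = false)}

/-- `H` is the constant distance closure of `G`. -/
def IsCDC (G H : SimpleGraph V) : Prop :=
  ∃ (n : ℕ) (Gs : ℕ → SimpleGraph V), Gs 0 = G ∧
    (∀ i < n, Gs (i + 1) =
      SimpleGraph.fromEdgeSet ((Gs i).edgeSet ∪ UPairs (Gs i))) ∧
    UPairs (Gs n) = ∅ ∧ H = Gs n

theorem two_le_countP_notMem_of_sum_mem {M : Type*} [AddGroup M] (S : AddSubgroup M)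
    [DecidablePred (· ∈ S)] {l : List M} (hl : l.sum ∈ S) (hne : ∃ x ∈ l, x ∉ S) :
    2 ≤ l.countP (· ∉ S) := by
  obtain ⟨x, hxl, hxS⟩ := hne
  obtain ⟨l₁, l₂, rfl⟩ := List.append_of_mem hxl
  by_contra hlt
  have hcount : l₁.countP (· ∉ S) = 0 ∧ l₂.countP (· ∉ S) = 0 := by
    simp only [List.countP_append, List.countP_cons, hxS, not_false_eq_true, decide_true,
      if_true] at hlt
    omega
  have hl₁ : l₁.sum ∈ S := list_sum_mem (by simpa [List.countP_eq_zero] using hcount.1)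
  have hl₂ : l₂.sum ∈ S := list_sum_mem (by simpa [List.countP_eq_zero] using hcount.2)
  rw [List.sum_append, List.sum_cons, S.add_mem_cancel_left hl₁, S.add_mem_cancel_right hl₂] at hl
  exact hxS hl

theorem sum_map_darts_sub {M : Type*} [AddGroup M] {G : SimpleGraph V} (P : V → M) {u v : V}
    (w : G.Walk u v) : (w.darts.map fun d => P d.fst - P d.snd).sum = P u - P v := by
  induction w with
  | nil => simp
  | cons h w ih => simp [ih]

theorem two_le_length_filter_edges {M : Type*} [AddGroup M] {G : SimpleGraph V} {P : V → M}
    {S : AddSubgroup M} {β : Sym2 V → Bool}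
    (hβ : ∀ ⦃u v : V⦄, G.Adj u v → (P u - P v ∉ S ↔ β s(u, v) = true)) {v : V}
    (c : G.Walk v v) (hne : ∃ e ∈ c.edges, β e = true) : 2 ≤ (c.edges.filter β).length := by
  classical
  have hβ' (d : G.Dart) : P d.fst - P d.snd ∉ S ↔ β d.edge = true := hβ d.adj
  have hsum : (c.darts.map fun d => P d.fst - P d.snd).sum ∈ S := by
    simp [sum_map_darts_sub]
  have hcount := two_le_countP_notMem_of_sum_mem S hsum <| by
    simpa [Walk.edges, hβ'] using hne
  rw [List.countP_map] at hcount
  rw [← List.countP_eq_length_filter, Walk.edges, List.countP_map]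
  exact hcount.trans_eq (List.countP_congr fun d _ => by simpa using hβ' d)

theorem isNACColoring_of_sub_mem_iff {M N : Type*} [AddGroup M] [AddGroup N]
    {G : SimpleGraph V} {δ : Sym2 V → Bool} {P : V → M} {Q : V → N}
    {S : AddSubgroup M} {T : AddSubgroup N}
    (hS : ∀ ⦃u v : V⦄, G.Adj u v → (P u - P v ∈ S ↔ δ s(u, v) = true))
    (hT : ∀ ⦃u v : V⦄, G.Adj u v → (Q u - Q v ∈ T ↔ δ s(u, v) = false))
    (hred : ∃ e ∈ G.edgeSet, δ e = true) (hblue : ∃ e ∈ G.edgeSet, δ e = false) :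
    IsNACColoring G δ := by
  refine ⟨hred, hblue, fun v c _ => ?_⟩
  by_cases hall_red : ∀ e ∈ c.edges, δ e = true
  · exact .inl hall_red
  by_cases hall_blue : ∀ e ∈ c.edges, δ e = false
  · exact .inr (.inl hall_blue)
  push Not at hall_red hall_blue
  refine .inr (.inr ⟨?_, ?_⟩)
  · exact two_le_length_filter_edges (P := Q) (S := T) (fun u v huv => by simp [hT huv]) c
      (by simpa using hall_blue)
  · exact two_le_length_filter_edges (P := P) (S := S) (β := fun e => !δ e)
      (fun u v huv => by simp [hS huv]) c (by simpa using hall_red)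

/-- The edge coloring attached to a valuation `v` and a map `P` on the vertices: an edge `xy` is
red (`true`) if `v (P x - P y) < γ`, and blue otherwise. -/
def thresholdColoring {R Γ : Type*} [Ring R] [LinearOrderedCommGroupWithZero Γ]
    (v : Valuation R Γ) (P : V → R) (γ : Γ) : Sym2 V → Bool :=
  Sym2.lift ⟨fun x y => decide (v (P x - P y) < γ),
    fun x y => by simp only [v.map_sub_swap (P x) (P y)]⟩

section Valuation

variable {R Γ : Type*} [Ring R] [LinearOrderedCommGroupWithZero Γ] {v : Valuation R Γ}

theorem thresholdColoring_eq_true_iff {P : V → R} {γ : Γ} {x y : V} :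
    thresholdColoring v P γ s(x, y) = true ↔ v (P x - P y) < γ :=
  decide_eq_true_iff

theorem thresholdColoring_eq_false_iff {P : V → R} {γ : Γ} {x y : V} :
    thresholdColoring v P γ s(x, y) = false ↔ γ ≤ v (P x - P y) :=
  decide_eq_false_iff_not.trans not_lt

theorem isNACColoring_thresholdColoring {G : SimpleGraph V} {P Q : V → R}
    (hPQ : ∀ ⦃x y : V⦄, G.Adj x y → v (P x - P y) * v (Q x - Q y) = 1) {γ : Γ} {a b c d : V}
    (hab : G.Adj a b) (hγab : γ ≤ v (P a - P b)) (hcd : G.Adj c d) (hcdγ : v (P c - P d) < γ) :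
    IsNACColoring G (thresholdColoring v P γ) := by
  have hγ : γ ≠ 0 := hcdγ.ne_zero
  refine isNACColoring_of_sub_mem_iff (P := P) (Q := Q)
    (S := v.ltAddSubgroup (Units.mk0 γ hγ)) (T := v.leAddSubgroup γ⁻¹)
    (fun x y _ => ?_) (fun x y hxy => ?_)
    ⟨s(c, d), hcd, thresholdColoring_eq_true_iff.2 hcdγ⟩
    ⟨s(a, b), hab, thresholdColoring_eq_false_iff.2 hγab⟩
  · rw [Valuation.mem_ltAddSubgroup_iff, Units.val_mk0, thresholdColoring_eq_true_iff]
  · have hP : v (P x - P y) ≠ 0 := left_ne_zero_of_mul_eq_one (hPQ hxy)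
    rw [Valuation.mem_leAddSubgroup_iff, eq_inv_of_mul_eq_one_right (hPQ hxy),
      inv_le_inv₀ (zero_lt_iff.2 hP) (zero_lt_iff.2 hγ), thresholdColoring_eq_false_iff]

end Valuation

section Germ

open Filter Polynomial

theorem exists_valuation_one_lt_of_transcendental {k K : Type*} [Field k] [Field K] [Algebra k K]
    {x : K} (hx : Transcendental k x) :
    ∃ A : ValuationSubring K, A.valuation.IsTrivialOn k ∧ 1 < A.valuation x := by
  have hx' : x ∉ (integralClosure k K).toSubring := fun h => hx (IsIntegral.isAlgebraic h)
  obtain ⟨A, hA, hxA⟩ := Subring.exists_le_valuationSubring_of_isIntegrallyClosedIn hx'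
  have hle (c : k) : A.valuation (algebraMap k K c) ≤ 1 :=
    (A.valuation_le_one_iff _).2 (hA (algebraMap_mem (integralClosure k K) c))
  refine ⟨A, ⟨fun c hc => (hle c).antisymm ?_⟩, ?_⟩
  · have hc' : A.valuation (algebraMap k K c) ≠ 0 := by simpa using hc
    simpa [inv_le_one₀ (zero_lt_iff.2 hc')] using hle c⁻¹
  · exact not_le.1 fun h => hxA ((A.valuation_le_one_iff x).1 h)

/-- Germs of `A`-valued functions along a filter as an `R`-algebra, with scalars acting as
constant germs. -/
instance instAlgebraGerm {T R A : Type*} [CommSemiring R] [Semiring A] [Algebra R A]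
    (l : Filter T) : Algebra R (Germ l A) where
  algebraMap := (Germ.coeRingHom l).comp (algebraMap R (T → A))
  commutes' c x := x.inductionOn fun f =>
    congrArg (Germ.ofFun (l := l)) (Algebra.commutes c f)
  smul_def' c x := x.inductionOn fun f =>
    congrArg (Germ.ofFun (l := l)) (Algebra.smul_def c f)

theorem transcendental_germ_of_tendsto_cofinite {T k : Type*} [CommRing k] [IsDomain k]
    {l : Filter T} [l.NeBot] {g : T → k} (hg : Tendsto g l cofinite) :
    Transcendental k (g : Germ l k) := by
  rw [transcendental_iff]
  intro p hp
  have haeval : aeval (g : Germ l k) p = ((fun t => p.eval (g t) : T → k) : Germ l k) := by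
    let toGerm : (T → k) →ₐ[k] Germ l k := ⟨Germ.coeRingHom l, fun _ => rfl⟩
    have h := aeval_algHom_apply toGerm g p
    rwa [aeval_pi_apply] at h
  have hroot : ∀ᶠ t in l, p.eval (g t) = 0 := Germ.coe_eq.1 (haeval.symm.trans hp)
  by_contra hp0
  have hnot_root : ∀ᶠ t in l, g t ∉ {x | p.IsRoot x} :=
    hg.eventually (finite_setOfPred_isRoot hp0).eventually_cofinite_notMem
  obtain ⟨t, ht, ht'⟩ := (hroot.and hnot_root).exists
  exact ht' ht

theorem exists_valuation_pi_one_lt_of_infinite_range.{u₁, u₂} {T : Type u₁} {k : Type u₂}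
    [Field k] {g : T → k} (hg : (Set.range g).Infinite) :
    ∃ (Γ : Type (max u₁ u₂)) (_ : LinearOrderedCommGroupWithZero Γ) (v : Valuation (T → k) Γ),
      v.IsTrivialOn k ∧ 1 < v g := by
  have : (comap g cofinite).NeBot := by
    rwa [comap_neBot_iff_frequently, frequently_cofinite_iff_infinite]
  let 𝒰 : Ultrafilter T := .of (comap g cofinite)
  have hgerm : Transcendental k (g : Germ (𝒰 : Filter T) k) :=
    transcendental_germ_of_tendsto_cofinite (tendsto_iff_comap.2 (Ultrafilter.of_le _))
  obtain ⟨A, hA, hgA⟩ := exists_valuation_one_lt_of_transcendental hgerm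
  exact ⟨_, _, A.valuation.comap (Germ.coeRingHom (𝒰 : Filter T)), ⟨hA.eq_one⟩, hgA⟩

end Germ

/-- The family `P` of realisations of `G` in the complex plane, indexed by `t`, has edge lengths
that are nonzero and do not depend on `t`. -/
def HasConstantEdgeLengths {T : Type*} (G : SimpleGraph V) (P : V → T → ℂ) : Prop :=
  ∀ ⦃u v : V⦄, G.Adj u v → ∃ r : ℝ, r ≠ 0 ∧ ∀ t, ‖P u t - P v t‖ = r

/-- A walk all of whose edges receive the same color in each NAC-coloring of `G`. -/
def IsUnicolor {G : SimpleGraph V} {u v : V} (w : G.Walk u v) : Prop :=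
  ∀ δ : Sym2 V → Bool, IsNACColoring G δ →
    (∀ e ∈ w.edges, δ e = true) ∨ (∀ e ∈ w.edges, δ e = false)

theorem IsUnicolor.color_eq {G : SimpleGraph V} {u v : V} {w : G.Walk u v} (hw : IsUnicolor w)
    {δ : Sym2 V → Bool} (hδ : IsNACColoring G δ) {e e' : Sym2 V} (he : e ∈ w.edges)
    (he' : e' ∈ w.edges) : δ e = δ e' := by
  rcases hw δ hδ with h | h <;> rw [h e he, h e' he']

namespace HasConstantEdgeLengths

variable {T : Type*} {G : SimpleGraph V} {P : V → T → ℂ}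

theorem sub_ne_zero (hP : HasConstantEdgeLengths G P) {u v : V} (huv : G.Adj u v) (t : T) :
    P u t - P v t ≠ 0 := by
  obtain ⟨r, hr, hrt⟩ := hP huv
  exact norm_ne_zero_iff.1 (hrt t ▸ hr)

theorem valuation_mul_valuation_star {Γ : Type*} [LinearOrderedCommMonoidWithZero Γ]
    (v : Valuation (T → ℂ) Γ) [v.IsTrivialOn ℂ] (hP : HasConstantEdgeLengths G P) {x y : V}
    (hxy : G.Adj x y) : v (P x - P y) * v (star (P x) - star (P y)) = 1 := by
  obtain ⟨r, hr, hrt⟩ := hP hxy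
  have hconst : (P x - P y) * (star (P x) - star (P y)) = algebraMap ℂ (T → ℂ) (r ^ 2) := by
    funext t
    simpa [hrt t] using Complex.mul_conj' (P x t - P y t)
  rw [← map_mul, hconst]
  exact Valuation.IsTrivialOn.eq_one _ (by simpa using hr)

theorem exists_isNACColoring_of_infinite_range (hP : HasConstantEdgeLengths G P)
    {a b c d : V} (hab : G.Adj a b) (hcd : G.Adj c d)
    (hinf : (Set.range ((P a - P b) / (P c - P d))).Infinite) :
    ∃ δ : Sym2 V → Bool, IsNACColoring G δ ∧ δ s(c, d) = true ∧ δ s(a, b) = false := by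
  obtain ⟨Γ, _, v, _, hv⟩ := exists_valuation_pi_one_lt_of_infinite_range hinf
  have hPQ := fun x y => hP.valuation_mul_valuation_star v (x := x) (y := y)
  have hquot : (P a - P b) / (P c - P d) * (P c - P d) = P a - P b :=
    funext fun t => div_mul_cancel₀ _ (hP.sub_ne_zero hcd t)
  have hlt : v (P c - P d) < v (P a - P b) := by
    rw [← hquot, map_mul]
    exact lt_mul_of_one_lt_left (zero_lt_iff.2 (left_ne_zero_of_mul_eq_one (hPQ c d hcd))) hv
  exact ⟨_, isNACColoring_thresholdColoring hPQ hab le_rfl hcd hlt,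
    thresholdColoring_eq_true_iff.2 hlt, thresholdColoring_eq_false_iff.2 le_rfl⟩

variable [TopologicalSpace T] [PreconnectedSpace T]

theorem sub_mem_span_singleton (hP : HasConstantEdgeLengths G P) (hcont : ∀ u, Continuous (P u))
    {a b c d : V} (hab : G.Adj a b) (hcd : G.Adj c d)
    (hcolor : ∀ δ : Sym2 V → Bool, IsNACColoring G δ → δ s(a, b) = δ s(c, d)) :
    P a - P b ∈ Submodule.span ℂ {P c - P d} := by
  have hconst (t t' : T) :
      ((P a - P b) / (P c - P d)) t = ((P a - P b) / (P c - P d)) t' := by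
    by_contra hne
    have hratio : Continuous ((P a - P b) / (P c - P d)) :=
      ((hcont a).sub (hcont b)).div ((hcont c).sub (hcont d)) (hP.sub_ne_zero hcd)
    have hinf : (Set.range ((P a - P b) / (P c - P d))).Infinite :=
      (isPreconnected_range hratio).infinite_of_nontrivial ⟨_, ⟨t, rfl⟩, _, ⟨t', rfl⟩, hne⟩
    obtain ⟨δ, hδ, hred, hblue⟩ := hP.exists_isNACColoring_of_infinite_range hab hcd hinf
    exact Bool.noConfusion ((hblue.symm.trans (hcolor δ hδ)).trans hred)
  rcases isEmpty_or_nonempty T with _ | ⟨⟨t₀⟩⟩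
  · rw [Subsingleton.elim (P a - P b) 0]
    exact zero_mem _
  refine Submodule.mem_span_singleton.2 ⟨((P a - P b) / (P c - P d)) t₀, funext fun t => ?_⟩
  rw [hconst t₀ t]
  exact div_mul_cancel₀ _ (hP.sub_ne_zero hcd t)

theorem norm_sub_eq_of_isUnicolor (hP : HasConstantEdgeLengths G P)
    (hcont : ∀ u, Continuous (P u)) {u v : V} {w : G.Walk u v} (hw : IsUnicolor w) (t t' : T) :
    ‖P u t - P v t‖ = ‖P u t' - P v t'‖ := by
  cases w with
  | nil => simp
  | @cons _ x _ hux w =>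
    have hmem : P u - P v ∈ Submodule.span ℂ {P u - P x} := by
      rw [← sum_map_darts_sub P (Walk.cons hux w)]
      refine list_sum_mem (List.forall_mem_map.2 fun d hd => ?_)
      exact hP.sub_mem_span_singleton hcont d.adj hux fun δ hδ =>
        hw.color_eq hδ (List.mem_map_of_mem hd) (by simp)
    obtain ⟨z, hz⟩ := Submodule.mem_span_singleton.1 hmem
    obtain ⟨r, -, hr⟩ := hP hux
    have hnorm (s : T) : ‖P u s - P v s‖ = ‖z‖ * r := by
      rw [← hr s, ← norm_mul]
      exact congrArg norm (congrFun hz s).symm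
    rw [hnorm, hnorm]

end HasConstantEdgeLengths

/-- The motion `f` on the time interval `[0, 1]`, in complex coordinates on the plane and indexed
by vertices. -/
noncomputable def complexMotion (f : ℝ → V → Plane) (u : V) (t : Set.Icc (0 : ℝ) 1) : ℂ :=
  Complex.orthonormalBasisOneI.repr.symm (f t u)

theorem norm_complexMotion_sub (f : ℝ → V → Plane) (u v : V) (t : Set.Icc (0 : ℝ) 1) :
    ‖complexMotion f u t - complexMotion f v t‖ = dist (f t u) (f t v) := by
  rw [← dist_eq_norm]
  exact LinearIsometryEquiv.dist_map _ _ _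

namespace IsFlex

variable {G H : SimpleGraph V} {p : V → Plane} {f : ℝ → V → Plane}

theorem continuous_complexMotion (hf : IsFlex G p f) (u : V) :
    Continuous (complexMotion f u) :=
  (LinearIsometryEquiv.continuous _).comp
    ((continuous_apply u).comp (continuousOn_iff_continuous_domRestrict.1 hf.1))

theorem hasConstantEdgeLengths_complexMotion (hf : IsFlex G p f) :
    HasConstantEdgeLengths G (complexMotion f) := by
  obtain ⟨-, rfl, hflex⟩ := hf
  refine fun u v huv => ⟨dist (f 0 u) (f 0 v), dist_ne_zero.2 ?_, fun t => ?_⟩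
  · exact (hflex 0 (by simp)).1 huv
  · rw [norm_complexMotion_sub]
    exact ((hflex t t.2).2 huv).symm

theorem dist_eq_of_isUnicolor (hf : IsFlex G p f) {u v : V} {w : G.Walk u v}
    (hw : IsUnicolor w) {t : ℝ} (ht : t ∈ Set.Icc (0 : ℝ) 1) :
    dist (p u) (p v) = dist (f t u) (f t v) := by
  have h := hf.hasConstantEdgeLengths_complexMotion.norm_sub_eq_of_isUnicolor
    hf.continuous_complexMotion hw ⟨0, by simp⟩ ⟨t, ht⟩
  simpa only [norm_complexMotion_sub, hf.2.1] using h

theorem fromEdgeSet_union_UPairs (hf : IsFlex G p f) {t₀ : ℝ} (ht₀ : t₀ ∈ Set.Icc (0 : ℝ) 1)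
    (hinj : Function.Injective (f t₀)) : IsFlex (fromEdgeSet (G.edgeSet ∪ UPairs G)) p f := by
  have hequiv : ∀ t ∈ Set.Icc (0 : ℝ) 1,
      FrameworkEquiv (fromEdgeSet (G.edgeSet ∪ UPairs G)) p (f t) := by
    intro t ht u v huv
    rcases (fromEdgeSet_adj _).1 huv |>.1 with hadj | ⟨a, b, hab, -, -, w, -, hw⟩
    · exact (hf.2.2 t ht).2 hadj
    · have hdist := hf.dist_eq_of_isUnicolor hw ht
      rcases Sym2.eq_iff.1 hab with ⟨rfl, rfl⟩ | ⟨rfl, rfl⟩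
      · exact hdist
      · rwa [dist_comm (p u), dist_comm (f t u)]
  refine ⟨hf.1, hf.2.1, fun t ht => ⟨fun u v huv => ?_, hequiv t ht⟩⟩
  rw [← dist_ne_zero, ← hequiv t ht huv, hequiv t₀ ht₀ huv, dist_ne_zero]
  exact hinj.ne huv.ne

theorem of_isCDC (hf : IsFlex G p f) {t₀ : ℝ} (ht₀ : t₀ ∈ Set.Icc (0 : ℝ) 1)
    (hinj : Function.Injective (f t₀)) (hcdc : IsCDC G H) : IsFlex H p f := by
  obtain ⟨n, Gs, rfl, hstep, -, rfl⟩ := hcdc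
  have hflex (i : ℕ) (hi : i ≤ n) : IsFlex (Gs i) p f := by
    induction i with
    | zero => exact hf
    | succ i ih =>
      rw [hstep i hi]
      exact (ih (Nat.le_of_succ_le hi)).fromEdgeSet_union_UPairs ht₀ hinj
  exact hflex n le_rfl

theorem isTrivialFlex_of_top (hf : IsFlex (⊤ : SimpleGraph V) p f) : IsTrivialFlex p f := by
  intro t ht u v
  rcases eq_or_ne u v with rfl | huv
  · simp
  · exact ((hf.2.2 t ht).2 ((top_adj u v).2 huv)).symm

end IsFlex

theorem not_movable_of_cdc_complete_general {G : SimpleGraph V} (hcdc : IsCDC G ⊤) :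
    ¬ Movable G := by
  rintro ⟨-, -, p, -, f, hf, hnontrivial, hfinite⟩
  obtain ⟨t₀, ht₀, hnotMem⟩ := (Set.Icc_infinite zero_lt_one).exists_notMem_finite hfinite
  have hinj : Function.Injective (f t₀) := not_not.1 fun h => hnotMem ⟨ht₀, h⟩
  exact hnontrivial (hf.of_isCDC ht₀ hinj hcdc).isTrivialFlex_of_top

/-- If the constant distance closure of `G` is the complete graph, then `G` is
not movable. -/
theorem not_movable_of_cdc_complete [Fintype V] (G H : SimpleGraph V)
    (hcdc : IsCDC G H) (hcomplete : H = ⊤) : ¬ Movable G := by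
  exact not_movable_of_cdc_complete_general (hcomplete ▸ hcdc)
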